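/- Let G be a finite group and N a normal subgroup with N° ≠ ∅, where N° = N \ ⋃{M normal in G : M < N} M. Then for every g ∈ N°, we have N = ⋂_{χ ∈ Irr(G), χ(g)=χ(1)} ker χ and K_g = N°, where K_g = {h ∈ G : {χ : χ(h)≠χ(1)} = {χ : χ(g)≠χ(1)}}. -/

import Mathlib

/-- `χ : G → ℂ` is an irreducible character: the character of a simple
finite-dimensional complex representation of `G`. -/
def IsIrrChar (G : Type) [Monoid G] (χ : G → ℂ) : Prop :=
  ∃ V : FDRep ℂ G, CategoryTheory.Simple V ∧ V.character = χ

/-- `E_g = {χ ∈ Irr(G) : χ(g) ≠ χ(1)}`. -/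
def Eset (G : Type) [Monoid G] (g : G) : Set (G → ℂ) :=
  {χ : G → ℂ | IsIrrChar G χ ∧ χ g ≠ χ 1}

/-- `K_g = {h ∈ G : E_h = E_g}`. -/
def Kset (G : Type) [Monoid G] (g : G) : Set G :=
  {h : G | Eset G h = Eset G g}

open Polynomial in
/-- A linear map of finite order over `ℂ` whose trace is the dimension is the identity. -/
theorem Module.End.eq_one_of_pow_eq_one_of_trace_eq_finrank {V : Type*} [AddCommGroup V]
    [Module ℂ V] [FiniteDimensional ℂ V] {f : Module.End ℂ V} {n : ℕ} (hn : n ≠ 0)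
    (hf : f ^ n = 1) (htr : LinearMap.trace ℂ V f = Module.finrank ℂ V) : f = 1 := by
  have hsplit : f.charpoly.Splits := IsAlgClosed.splits _
  have hcard : f.charpoly.roots.card = Module.finrank ℂ V := by
    rw [← hsplit.natDegree_eq_card_roots, LinearMap.charpoly_natDegree]
  have hsum : (f.charpoly.roots.map (fun z : ℂ => 1 - z.re)).sum = 0 := by
    have h1 := congrArg Complex.reAddGroupHom
      (htr.symm.trans (Module.End.trace_eq_sum_roots_charpoly_of_splits hsplit))
    rw [map_multiset_sum] at h1
    simp only [Complex.coe_reAddGroupHom, Complex.natCast_re] at h1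
    simp [Multiset.sum_map_sub, hcard, h1]
  have hnorm : ∀ z ∈ f.charpoly.roots, ‖z‖ = 1 := fun z hz => by
    have hev : f.HasEigenvalue z :=
      (Module.End.hasEigenvalue_iff_isRoot_charpoly f z).2 (isRoot_of_mem_roots hz)
    obtain ⟨v, hv⟩ := hev.exists_hasEigenvector
    have h2 := hv.pow_apply n
    rw [hf, Module.End.one_apply] at h2
    have h3 : (1 - z ^ n) • v = 0 := by rw [sub_smul, one_smul, ← h2, sub_self]
    have h4 : 1 - z ^ n = 0 := (smul_eq_zero.1 h3).resolve_right hv.2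
    exact Complex.norm_eq_one_of_pow_eq_one (sub_eq_zero.1 h4).symm hn
  have hone : ∀ z ∈ f.charpoly.roots, z = 1 := fun z hz => by
    have hnonneg : ∀ x ∈ f.charpoly.roots.map (fun z : ℂ => 1 - z.re), 0 ≤ x := by
      intro x hx
      obtain ⟨w, hw, rfl⟩ := Multiset.mem_map.1 hx
      have := Complex.re_le_norm w
      rw [hnorm w hw] at this
      linarith
    have hre : z.re = 1 := by
      have := Multiset.all_zero_of_le_zero_le_of_sum_eq_zero hnonneg hsum _
        (Multiset.mem_map_of_mem _ hz)
      linarith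
    have him : z.im = 0 := by
      have := Complex.sq_norm z
      rw [hnorm z hz, Complex.normSq_apply, hre] at this
      nlinarith
    exact Complex.ext hre him
  have hpoly : f.charpoly = (X - C 1) ^ Module.finrank ℂ V := by
    rw [hsplit.eq_prod_roots_of_monic (LinearMap.charpoly_monic f),
      Multiset.eq_replicate.2 ⟨hcard, hone⟩]
    simp
  have hnil : IsNilpotent (f - 1) := by
    refine ⟨Module.finrank ℂ V, ?_⟩
    have := LinearMap.aeval_self_charpoly f
    rw [hpoly] at this
    simpa using this
  have hss : f.IsSemisimple := by
    refine Module.End.isSemisimple_of_squarefree_aeval_eq_zero (p := X ^ n - C 1) ?_ ?_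
    · exact (separable_X_pow_sub_C (1 : ℂ) (by exact_mod_cast hn) one_ne_zero).squarefree
    · simp [hf]
  have hss' : (f - 1).IsSemisimple := by
    simpa using (Module.End.isSemisimple_sub_algebraMap_iff (μ := (1 : ℂ))).2 hss
  exact sub_eq_zero.1 (Module.End.eq_zero_of_isNilpotent_isSemisimple hnil hss')

/-- The kernel of the character of a representation is the kernel of the representation. -/
theorem FDRep.character_eq_character_one_iff {G : Type} [Group G] [Finite G] (V : FDRep ℂ G)
    (g : G) : V.character g = V.character 1 ↔ V.ρ g = 1 := by
  refine ⟨fun h => ?_, fun h => by simp [FDRep.character, h]⟩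
  refine Module.End.eq_one_of_pow_eq_one_of_trace_eq_finrank (n := Nat.card G)
    Nat.card_pos.ne' ?_ (h.trans V.char_one)
  rw [← map_pow, pow_card_eq_one', map_one]

/-- An irreducible representation gives a simple object of `FDRep`. -/
theorem FDRep.simple_of_isIrreducible {G : Type} [Group G] [Finite G] {V : Type}
    [AddCommGroup V] [Module ℂ V] [FiniteDimensional ℂ V] (ρ : Representation ℂ G V)
    [ρ.IsIrreducible] : CategoryTheory.Simple (FDRep.of ρ) := by
  rw [FDRep.simple_iff_end_is_rank_one, ← (FDRep.forget₂HomLinearEquiv _ _).finrank_eq,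
    (Rep.homLinearEquiv _ _).finrank_eq]
  exact Representation.IsIrreducible.finrank_intertwiningMap_self ρ

/-- An atom in the lattice of subrepresentations is irreducible. -/
theorem Subrepresentation.isIrreducible_of_isAtom {k G V : Type*} [Monoid G] [Field k]
    [AddCommGroup V] [Module k V] {ρ : Representation k G V} {T : Subrepresentation ρ}
    (hT : IsAtom T) : T.toRepresentation.IsIrreducible where
  exists_pair_ne := ⟨⊥, ⊤, fun h => hT.1 <| by
    refine Subrepresentation.toSubmodule_injective ((Submodule.eq_bot_iff _).2 fun x hx => ?_)
    have : (⟨x, hx⟩ : T.toSubmodule) ∈ (⊥ : Subrepresentation T.toRepresentation) :=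
      h ▸ Submodule.mem_top
    exact congrArg Subtype.val ((Submodule.mem_bot k).1 this)⟩
  eq_bot_or_eq_top U := by
    let U' : Subrepresentation ρ :=
      { toSubmodule := U.toSubmodule.map T.toSubmodule.subtype
        apply_mem_toSubmodule := by
          rintro g _ ⟨x, hx, rfl⟩
          exact ⟨_, U.apply_mem_toSubmodule g hx, rfl⟩ }
    have hU' : U' ≤ T := Submodule.map_subtype_le _ _
    refine (hT.le_iff.1 hU').imp (fun h => ?_) fun h => ?_
    · have h' : U.toSubmodule.map T.toSubmodule.subtype = ⊥ :=
        congrArg Subrepresentation.toSubmodule h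
      exact Subrepresentation.toSubmodule_injective
        (Submodule.map_injective_of_injective T.toSubmodule.injective_subtype
          (h'.trans (Submodule.map_bot _).symm))
    · have h' : U.toSubmodule.map T.toSubmodule.subtype = T.toSubmodule :=
        congrArg Subrepresentation.toSubmodule h
      refine Subrepresentation.toSubmodule_injective
        (Submodule.map_injective_of_injective T.toSubmodule.injective_subtype ?_)
      rw [h']
      exact (Submodule.map_subtype_top _).symm

/-- An element acting nontrivially on a representation of a finite group acts nontrivially on
an irreducible subrepresentation. -/
theorem Representation.exists_isIrreducible_apply_ne {k G V : Type*} [Group G] [Finite G]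
    [Field k] [NeZero (Nat.card G : k)] [AddCommGroup V] [Module k V]
    (ρ : Representation k G V) {h : G} {v : V} (hv : ρ h v ≠ v) :
    ∃ T : Subrepresentation ρ, T.toRepresentation.IsIrreducible ∧
      ∃ x ∈ T.toSubmodule, ρ h x ≠ x := by
  by_contra! hcon
  let e := Subrepresentation.subrepresentationSubmoduleOrderIso (ρ := ρ)
  have hmem : ρ.asModuleEquiv.symm v ∈
      sSup {S : Submodule (MonoidAlgebra k G) ρ.asModule |
        IsSimpleModule (MonoidAlgebra k G) S} := by
    rw [IsSemisimpleModule.sSup_simples_eq_top]; trivial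
  rw [sSup_eq_iSup'] at hmem
  refine hv (Submodule.iSup_induction _
    (motive := fun x => ρ h (ρ.asModuleEquiv x) = ρ.asModuleEquiv x) hmem ?_ (by simp) ?_)
  · rintro ⟨S, hS⟩ x hx
    have hatom : IsAtom (e.symm S) :=
      (e.symm.isAtom_iff S).2 (isSimpleModule_iff_isAtom.1 hS)
    exact hcon _ (Subrepresentation.isIrreducible_of_isAtom hatom) _ hx
  · intro x y hx hy
    rw [map_add, map_add, hx, hy]

/-- A normal subgroup is cut out by the irreducible representations that are trivial on it. -/
theorem FDRep.exists_simple_ρ_ne_one {G : Type} [Group G] [Finite G] (N : Subgroup G)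
    [hN : N.Normal] {h : G} (hh : h ∉ N) :
    ∃ V : FDRep ℂ G, CategoryTheory.Simple V ∧ (∀ n ∈ N, V.ρ n = 1) ∧ V.ρ h ≠ 1 := by
  let ρ := Representation.ofMulAction ℂ G (G ⧸ N)
  have hρ : ∀ n ∈ N, ρ n = 1 := fun n hn => by
    refine MonoidAlgebra.lhom_ext' fun x => LinearMap.ext_ring ?_
    obtain ⟨x, rfl⟩ := QuotientGroup.mk_surjective x
    have : n • (x : G ⧸ N) = x := by
      rw [MulAction.Quotient.smul_coe, smul_eq_mul, eq_comm, QuotientGroup.eq]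
      simpa [mul_assoc] using hN.conj_mem n hn x⁻¹
    simp [ρ, Representation.ofMulAction_single, this]
  have hρh : ρ h (MonoidAlgebra.single ((1 : G) : G ⧸ N) 1) ≠
      MonoidAlgebra.single ((1 : G) : G ⧸ N) 1 := by
    rw [Representation.ofMulAction_single, Ne, MonoidAlgebra.single_left_inj one_ne_zero,
      MulAction.Quotient.smul_coe, smul_eq_mul, mul_one, eq_comm, QuotientGroup.eq]
    simpa using hh
  obtain ⟨T, hT, x, hx, hxne⟩ := ρ.exists_isIrreducible_apply_ne hρh
  have : FiniteDimensional ℂ (MonoidAlgebra ℂ (G ⧸ N)) :=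
    Module.Finite.equiv (MonoidAlgebra.coeffLinearEquiv ℂ).symm
  refine ⟨FDRep.of T.toRepresentation, FDRep.simple_of_isIrreducible _, fun n hn => ?_,
    fun hone => hxne ?_⟩
  · exact LinearMap.ext fun y => Subtype.ext (LinearMap.congr_fun (hρ n hn) y.1)
  · exact congrArg Subtype.val (LinearMap.congr_fun hone ⟨x, hx⟩)

/-- if `N` is normal and `N° ≠ ∅`, then for every `g ∈ N°` we have
`N = ⋂_{χ(g)=χ(1)} ker χ` and `K_g = N°`. -/
theorem circ_eq_Kset {G : Type} [Group G] [Fintype G] (N : Subgroup G)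
    (hN : N.Normal)
    (hne : ((N : Set G) \
      ⋃ M ∈ {M : Subgroup G | M.Normal ∧ M < N}, (M : Set G)) ≠ ∅) :
    ∀ g ∈ (N : Set G) \
        ⋃ M ∈ {M : Subgroup G | M.Normal ∧ M < N}, (M : Set G),
      (N : Set G) =
          (⋂ χ ∈ {χ : G → ℂ | IsIrrChar G χ ∧ χ g = χ 1}, {h : G | χ h = χ 1}) ∧
        Kset G g =
          (N : Set G) \
            ⋃ M ∈ {M : Subgroup G | M.Normal ∧ M < N}, (M : Set G) := by
  have key : ∀ g ∈ (N : Set G) \ ⋃ M ∈ {M : Subgroup G | M.Normal ∧ M < N}, (M : Set G),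
      ∀ V : FDRep ℂ G, V.ρ g = 1 → ∀ n ∈ N, V.ρ n = 1 := by
    intro g hg V hV n hn
    by_contra hVn
    refine hg.2 (Set.mem_biUnion (x := N ⊓ V.ρ.ker) ⟨inferInstance, ?_⟩ ⟨hg.1, hV⟩)
    exact lt_of_le_of_ne inf_le_left fun h => hVn (inf_eq_left.1 h hn)
  intro g hg
  have hinter : (N : Set G) =
      ⋂ χ ∈ {χ : G → ℂ | IsIrrChar G χ ∧ χ g = χ 1}, {h : G | χ h = χ 1} := by
    ext h
    simp only [Set.mem_iInter]
    refine ⟨?_, fun hh => ?_⟩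
    · rintro hh _ ⟨⟨V, -, rfl⟩, hχ⟩
      exact (V.character_eq_character_one_iff h).2
        (key g hg V ((V.character_eq_character_one_iff g).1 hχ) h hh)
    · by_contra hhN
      obtain ⟨V, hV, hVN, hVh⟩ := FDRep.exists_simple_ρ_ne_one N hhN
      exact hVh ((V.character_eq_character_one_iff h).1 (hh V.character
        ⟨⟨V, hV, rfl⟩, (V.character_eq_character_one_iff g).2 (hVN g hg.1)⟩))
  refine ⟨hinter, Set.ext fun h => ⟨fun hh => ?_, fun hh => ?_⟩⟩
  · have hiff : ∀ χ, IsIrrChar G χ → (χ h = χ 1 ↔ χ g = χ 1) := fun χ hχ => by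
      have := Set.ext_iff.1 hh χ
      simp only [Eset, Set.mem_ofPred_eq, hχ, true_and] at this
      exact not_iff_not.1 this
    refine ⟨?_, fun hM => ?_⟩
    · rw [hinter]
      simp only [Set.mem_iInter]
      exact fun χ hχ => (hiff χ hχ.1).2 hχ.2
    · obtain ⟨M, ⟨hMnormal, hMN⟩, hhM⟩ := Set.mem_iUnion₂.1 hM
      have hgM : g ∉ M := fun hgM => hg.2 (Set.mem_biUnion ⟨hMnormal, hMN⟩ hgM)
      obtain ⟨V, hV, hVM, hVg⟩ := FDRep.exists_simple_ρ_ne_one M hgM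
      exact hVg ((V.character_eq_character_one_iff g).1 ((hiff _ ⟨V, hV, rfl⟩).1
        ((V.character_eq_character_one_iff h).2 (hVM h hhM))))
  · refine Set.ext fun χ => and_congr_right ?_
    rintro ⟨V, -, rfl⟩
    rw [Ne, Ne, V.character_eq_character_one_iff, V.character_eq_character_one_iff]
    exact not_congr ⟨fun hV => key h hh V hV g hg.1, fun hV => key g hg V hV h hh.1⟩
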